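/- Let Σ_xx be an N×N diagonal matrix with positive diagonal entries σ_{x,1}², …, σ_{x,N}², and let Σ_ww be an M×M diagonal matrix with positive diagonal entries σ_{w,1}², …, σ_{w,M}², where M ≤ N. For any real M×N matrix A satisfying A Aᵀ = I_M, there exists a partial permutation matrix P̃ ∈ {0,1}^{M×N} such that Tr((Σ_xx⁻¹ + Aᵀ Σ_ww⁻¹ A)⁻¹) ≥ Tr((Σ_xx⁻¹ + P̃ᵀ Σ_ww⁻¹ P̃)⁻¹). -/

import Mathlib

open Matrix BigOperators

/-!
Write `D = Σ_xx⁻¹` and `B = Aᵀ Σ_ww⁻¹ A`, and minimise `U ↦ Tr((D + Uᵀ B U)⁻¹)` over the compact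
orthogonal group. At a minimiser, rename `Uᵀ B U` to `B` and put `Y = (D + B)⁻¹`; the derivative
along `U = exp(tK)` with the skew matrix `K = Y² B - B Y²` is `-Tr(K²) = ‖K‖²`, so `K = 0`. Thus `B`
commutes with `Y²`, hence with its positive square root `Y`, hence with `D`. If the diagonal entries
of `D` are distinct, `B` is then diagonal, and its characteristic polynomial shows that its
entries are those of `Σ_ww⁻¹` padded with zeros, that is `B = P̃ᵀ Σ_ww⁻¹ P̃`. Diagonal matrices
with distinct entries are dense and there are finitely many `P̃`, so the general case follows by
continuity.
-/

section PartialPermutation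

open Polynomial

variable {m n R : Type*} [DecidableEq n]

/-- The partial permutation matrix whose `i`-th row is the standard basis row vector indexed by
`f i`. Such a matrix has at most one `1` in each column because `f` is an embedding. -/
def partialPermMatrix (R : Type*) [Zero R] [One R] (f : m ↪ n) : Matrix m n R :=
  (1 : Matrix n n R).submatrix f id

theorem partialPermMatrix_eq_zero_or_one [Zero R] [One R] (f : m ↪ n) (i : m) (j : n) :
    partialPermMatrix R f i j = 0 ∨ partialPermMatrix R f i j = 1 := by
  simp only [partialPermMatrix, submatrix_apply, one_apply]
  split_ifs <;> simp

variable [DecidableEq m]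

theorem partialPermMatrix_mul_transpose [Fintype n] [NonAssocSemiring R] (f : m ↪ n) :
    partialPermMatrix R f * (partialPermMatrix R f)ᵀ = 1 := by
  rw [partialPermMatrix, transpose_submatrix, transpose_one,
    ← submatrix_mul _ _ _ _ _ Function.bijective_id, Matrix.one_mul, submatrix_one f f.injective]

variable [Fintype m]

theorem transpose_mul_diagonal_mul_partialPermMatrix [NonAssocSemiring R] (f : m ↪ n)
    (w : m → R) :
    (partialPermMatrix R f)ᵀ * diagonal w * partialPermMatrix R f =
      diagonal (Function.extend f w 0) := by
  ext j k
  rw [mul_apply]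
  simp only [mul_diagonal, transpose_apply, partialPermMatrix, submatrix_apply, one_apply, id]
  rcases em (∃ i, f i = j) with ⟨i, rfl⟩ | hj
  · rw [Fintype.sum_eq_single i fun i' hi' => by simp [hi']]
    simp [diagonal_apply, f.injective.extend_apply]
  · simp [diagonal_apply, not_exists.1 hj]

variable [Fintype n]

theorem exists_perm_of_charpoly_diagonal_eq [CommRing R] [IsDomain R] {b c : n → R}
    (h : (diagonal b).charpoly = (diagonal c).charpoly) : ∃ σ : Equiv.Perm n, b = c ∘ σ := by
  classical
  have hroots_diag (e : n → R) : (diagonal e).charpoly.roots = Finset.univ.val.map e := by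
    rw [charpoly_diagonal, roots_prod _ _ (Finset.prod_ne_zero_iff.2 fun i _ => X_sub_C_ne_zero _)]
    simp only [roots_X_sub_C, Multiset.bind_singleton]
  have hroots := congrArg roots h
  rw [hroots_diag, hroots_diag] at hroots
  have hcard (r : R) : Fintype.card {i // b i = r} = Fintype.card {i // c i = r} := by
    simpa [Multiset.count_map, Fintype.card_subtype, Finset.card_def, eq_comm]
      using congrArg (Multiset.count r) hroots
  let σ := Equiv.ofFiberEquiv fun r => Fintype.equivOfCardEq (hcard r)
  exact ⟨σ, funext fun i => (Equiv.ofFiberEquiv_map _ i).symm⟩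

theorem exists_embedding_of_transpose_mul_diagonal_mul_eq_diagonal [CommRing R] [IsDomain R]
    {A : Matrix m n R} (hA : A * Aᵀ = 1) {w : m → R} {b : n → R}
    (hb : Aᵀ * diagonal w * A = diagonal b) :
    ∃ f : m ↪ n, (partialPermMatrix R f)ᵀ * diagonal w * partialPermMatrix R f = diagonal b := by
  have hcard : Fintype.card m ≤ Fintype.card n := by
    simpa only [hA, rank_one] using (rank_mul_le_left A Aᵀ).trans A.rank_le_card_width
  have hcharpoly {C : Matrix m n R} (hC : C * Cᵀ = 1) : (Cᵀ * diagonal w * C).charpoly =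
      X ^ (Fintype.card n - Fintype.card m) * (diagonal w).charpoly := by
    rw [Matrix.mul_assoc, charpoly_mul_comm_of_le _ _ hcard, Matrix.mul_assoc, hC, Matrix.mul_one]
  obtain ⟨g⟩ := Function.Embedding.nonempty_of_card_le hcard
  obtain ⟨σ, rfl⟩ : ∃ σ : Equiv.Perm n, b = Function.extend g w 0 ∘ σ := by
    apply exists_perm_of_charpoly_diagonal_eq
    rw [← hb, ← transpose_mul_diagonal_mul_partialPermMatrix, hcharpoly hA,
      hcharpoly (partialPermMatrix_mul_transpose g)]
  refine ⟨g.trans σ.symm.toEmbedding, ?_⟩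
  rw [transpose_mul_diagonal_mul_partialPermMatrix]
  congr 1
  ext j
  exact (congrFun (g.injective.extend_comp σ.symm.injective w (0 : n → R)) j).trans (by simp)

end PartialPermutation

theorem inv_diagonal_of_ne_zero {n 𝕜 : Type*} [Fintype n] [DecidableEq n] [Field 𝕜]
    {s : n → 𝕜} (hs : ∀ i, s i ≠ 0) : (diagonal s)⁻¹ = diagonal s⁻¹ := by
  refine inv_eq_right_inv ?_
  simp [diagonal_mul_diagonal, hs]

theorem eq_diagonal_of_commute_diagonal {n R : Type*} [Fintype n] [DecidableEq n]
    [CommRing R] [IsDomain R] {d : n → R} (hd : Function.Injective d) {B : Matrix n n R}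
    (h : Commute (diagonal d) B) : B = diagonal B.diag := by
  ext j k
  rcases eq_or_ne j k with rfl | hjk
  · simp
  have hentry : d j * B j k = d k * B j k := by
    simpa [diagonal_mul, mul_diagonal, mul_comm] using congrFun₂ h.eq j k
  rw [diagonal_apply_ne _ hjk]
  by_contra hB
  exact hjk (hd (mul_right_cancel₀ hB hentry))

open scoped MatrixOrder Matrix.Norms.L2Operator ComplexOrder in
theorem commute_of_posSemidef_of_commute_sq {n 𝕜 : Type*} [Fintype n] [DecidableEq n] [RCLike 𝕜]
    {X Z : Matrix n n 𝕜} (hX : X.PosSemidef) (h : Commute (X ^ 2) Z) : Commute X Z := by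
  rw [← CFC.sqrt_sq X hX.nonneg]
  exact h.cfcₙ_nnreal _

theorem isCompact_unitaryGroup {n 𝕜 : Type*} [Fintype n] [DecidableEq n] [RCLike 𝕜] :
    IsCompact (unitaryGroup n 𝕜 : Set (Matrix n n 𝕜)) := by
  have hbox : IsCompact (Set.univ.pi fun _ : n => Set.univ.pi fun _ : n =>
      Metric.closedBall (0 : 𝕜) 1) :=
    isCompact_univ_pi fun _ => isCompact_univ_pi fun _ => isCompact_closedBall 0 1
  refine hbox.of_isClosed_subset (isClosed_unitary (R := Matrix n n 𝕜)) fun U hU i _ j _ => ?_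
  simpa using entry_norm_bound_of_unitary hU i j

theorem dense_setOf_injective {ι : Type*} [Finite ι] :
    Dense {d : ι → ℝ | Function.Injective d} := by
  have hinter : {d : ι → ℝ | Function.Injective d} =
      ⋂ p : {p : ι × ι // p.1 ≠ p.2}, {d | d p.1.1 - d p.1.2 ∈ ({0}ᶜ : Set ℝ)} := by
    ext d
    simp [Function.Injective, sub_eq_zero, not_imp_not]
  rw [hinter]
  refine dense_iInter_of_isOpen (fun p => isOpen_compl_singleton.preimage (by fun_prop)) ?_
  rintro ⟨⟨i, j⟩, hij : i ≠ j⟩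
  classical
  let φ : (ι → ℝ) →ₗ[ℝ] ℝ := .proj i - .proj j
  have hφ : Function.Surjective φ := fun c => ⟨Pi.single i c, by simp [φ, hij.symm]⟩
  exact (dense_compl_singleton 0).preimage (φ.isOpenMap_of_finiteDimensional hφ)

theorem hasDerivAt_exp_conj {𝕜 𝔸 : Type*} [RCLike 𝕜] [NormedRing 𝔸] [NormedAlgebra 𝕜 𝔸]
    [CompleteSpace 𝔸] (B K : 𝔸) :
    HasDerivAt (fun t : 𝕜 => NormedSpace.exp (t • -K) * B * NormedSpace.exp (t • K))
      (B * K - K * B) 0 := by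
  have hexp (L : 𝔸) : HasDerivAt (fun t : 𝕜 => NormedSpace.exp (t • L)) L 0 := by
    have hderiv := hasDerivAt_exp_smul_const L (0 : 𝕜)
    rwa [zero_smul, NormedSpace.exp_zero, one_mul] at hderiv
  have hconj := ((hexp (-K)).mul_const B).mul (hexp K)
  rwa [zero_smul, zero_smul, NormedSpace.exp_zero, mul_one, one_mul, neg_mul,
    neg_add_eq_sub] at hconj

theorem trace_mul_commutator_mul {n R : Type*} [Fintype n] [DecidableEq n] [CommRing R]
    (Y B K : Matrix n n R) :
    (Y * (B * K - K * B) * Y).trace = ((Y ^ 2 * B - B * Y ^ 2) * K).trace := by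
  rw [trace_mul_cycle, ← pow_two, Matrix.mul_sub, ← Matrix.mul_assoc, ← Matrix.mul_assoc,
    trace_sub, trace_mul_cycle _ K B, ← trace_sub, ← Matrix.sub_mul]

section TraceInv

variable {n : Type*} [Fintype n] [DecidableEq n]

theorem continuousAt_trace_inv {𝕜 : Type*} [Field 𝕜] [TopologicalSpace 𝕜]
    [IsTopologicalDivisionRing 𝕜] {X : Matrix n n 𝕜} (hX : IsUnit X) :
    ContinuousAt (fun Y : Matrix n n 𝕜 => Y⁻¹.trace) X := by
  have hdet : ContinuousAt Ring.inverse X.det := by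
    simpa using continuousAt_inv₀ ((isUnit_iff_isUnit_det X).1 hX).ne_zero
  exact (Continuous.matrix_trace continuous_id).continuousAt.comp (continuousAt_matrix_inv X hdet)

theorem continuousAt_trace_inv_diagonal_add {d : n → ℝ} (hd : ∀ j, 0 < d j)
    {B : Matrix n n ℝ} (hB : B.PosSemidef) :
    ContinuousAt (fun e : n → ℝ => (diagonal e + B)⁻¹.trace) d :=
  (continuousAt_trace_inv ((PosDef.diagonal hd).add_posSemidef hB).isUnit).comp
    (f := fun e => diagonal e + B) (by fun_prop)

section Deriv

open scoped Matrix.Norms.L2Operator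

theorem hasDerivAt_trace_inv {𝕜 : Type*} [RCLike 𝕜] {X : 𝕜 → Matrix n n 𝕜}
    {X' : Matrix n n 𝕜} {t : 𝕜} (hX : HasDerivAt X X' t) (hunit : IsUnit (X t)) :
    HasDerivAt (fun s => (X s)⁻¹.trace) (-((X t)⁻¹ * X' * (X t)⁻¹).trace) t := by
  obtain ⟨u, hu⟩ := hunit
  have hinv : HasDerivAt (fun s => (X s)⁻¹) (-((X t)⁻¹ * X' * (X t)⁻¹)) t := by
    have hderiv := (hasFDerivAt_ringInverse (𝕜 := 𝕜) u).comp_hasDerivAt_of_eq t hX hu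
    simpa [Function.comp_def, ← nonsing_inv_eq_ringInverse, ← hu] using hderiv
  rw [← trace_neg]
  exact (traceLinearMap n 𝕜 𝕜).toContinuousLinearMap.hasFDerivAt.comp_hasDerivAt t hinv

theorem exp_mem_orthogonalGroup {K : Matrix n n ℝ} (hK : Kᵀ = -K) :
    NormedSpace.exp K ∈ orthogonalGroup n ℝ := by
  let := NormedAlgebra.restrictScalars ℚ ℝ (Matrix n n ℝ)
  exact NormedSpace.exp_mem_unitary_of_mem_skewAdjoint (skewAdjoint.mem_iff.2 hK)

theorem commute_of_forall_trace_inv_le {D B : Matrix n n ℝ} (hB : Bᵀ = B) (hX : (D + B).PosDef)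
    (hmin : ∀ U ∈ orthogonalGroup n ℝ, (D + B)⁻¹.trace ≤ (D + Uᵀ * B * U)⁻¹.trace) :
    Commute D B := by
  set Y := (D + B)⁻¹ with hY
  have hYt : Yᵀ = Y := hX.inv.isHermitian.eq
  let K := Y ^ 2 * B - B * Y ^ 2
  have hK : Kᵀ = -K := by simp [K, transpose_mul, transpose_pow, hB, hYt]
  let X (t : ℝ) := D + NormedSpace.exp (t • -K) * B * NormedSpace.exp (t • K)
  have hX0 : X 0 = D + B := by simp [X]
  have hlocal : IsLocalMin (fun t => (X t)⁻¹.trace) 0 := by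
    refine Filter.Eventually.of_forall fun t => ?_
    have hU := hmin (NormedSpace.exp (t • K))
      (exp_mem_orthogonalGroup (by rw [transpose_smul, hK, smul_neg]))
    rwa [← Matrix.exp_transpose, transpose_smul, hK, hY, ← hX0] at hU
  have hcrit : (Y * (B * K - K * B) * Y).trace = 0 := by
    have hderiv := hlocal.hasDerivAt_eq_zero
      (hasDerivAt_trace_inv ((hasDerivAt_exp_conj B K).const_add D) (hX0 ▸ hX.isUnit))
    rwa [neg_eq_zero, hX0] at hderiv
  have htrace : (K * Kᴴ).trace = -(Y * (B * K - K * B) * Y).trace := by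
    rw [conjTranspose_eq_transpose_of_trivial, hK, Matrix.mul_neg, trace_neg,
      trace_mul_commutator_mul]
  have hK0 : K = 0 := trace_mul_conjTranspose_self_eq_zero_iff.1 (by rw [htrace, hcrit, neg_zero])
  have hYB : Commute Y B :=
    commute_of_posSemidef_of_commute_sq hX.inv.posSemidef (sub_eq_zero.1 hK0)
  have hXB : Commute (D + B) B := by
    obtain ⟨u, hu⟩ := hX.isUnit
    rw [← hu] at hY ⊢
    rw [hY, ← coe_units_inv] at hYB
    exact Commute.units_inv_left_iff.1 hYB
  simpa using hXB.sub_left (Commute.refl B)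

end Deriv

theorem exists_orthogonal_commute_trace_inv_le {D B : Matrix n n ℝ} (hD : D.PosDef)
    (hB : B.PosSemidef) : ∃ U ∈ orthogonalGroup n ℝ,
      Commute D (Uᵀ * B * U) ∧ (D + Uᵀ * B * U)⁻¹.trace ≤ (D + B)⁻¹.trace := by
  have hpos (U : Matrix n n ℝ) : (D + Uᵀ * B * U).PosDef :=
    hD.add_posSemidef (hB.conjTranspose_mul_mul_same U)
  have hcont : ContinuousOn (fun U : Matrix n n ℝ => (D + Uᵀ * B * U)⁻¹.trace)
      (orthogonalGroup n ℝ : Set (Matrix n n ℝ)) := fun U _ =>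
    ((continuousAt_trace_inv (hpos U).isUnit).comp (f := fun V : Matrix n n ℝ => D + Vᵀ * B * V)
      (by fun_prop)).continuousWithinAt
  obtain ⟨U, hU, hmin⟩ := isCompact_unitaryGroup.exists_isMinOn ⟨1, one_mem _⟩ hcont
  refine ⟨U, hU, commute_of_forall_trace_inv_le ?_ (hpos U) fun V hV => ?_, ?_⟩
  · exact (hB.conjTranspose_mul_mul_same U).isHermitian.eq
  · simpa [transpose_mul, Matrix.mul_assoc] using hmin (mul_mem hU hV)
  · simpa using hmin (one_mem (orthogonalGroup n ℝ))

variable {m : Type*} [Fintype m] [DecidableEq m]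

theorem exists_embedding_trace_inv_le_of_injective {d : n → ℝ} (hd : ∀ j, 0 < d j)
    (hinj : Function.Injective d) {w : m → ℝ} (hw : ∀ i, 0 ≤ w i)
    {A : Matrix m n ℝ} (hA : A * Aᵀ = 1) :
    ∃ f : m ↪ n,
      (diagonal d + (partialPermMatrix ℝ f)ᵀ * diagonal w * partialPermMatrix ℝ f)⁻¹.trace ≤
        (diagonal d + Aᵀ * diagonal w * A)⁻¹.trace := by
  obtain ⟨U, hU, hcomm, hle⟩ := exists_orthogonal_commute_trace_inv_le (PosDef.diagonal hd)
    ((PosSemidef.diagonal hw).conjTranspose_mul_mul_same A)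
  have hAU : (A * U) * (A * U)ᵀ = 1 := by
    have hUU : U * Uᵀ = 1 := (mem_orthogonalGroup_iff n ℝ).1 hU
    rw [transpose_mul, Matrix.mul_assoc, ← Matrix.mul_assoc U, hUU, Matrix.one_mul, hA]
  have hconj : Uᵀ * (Aᴴ * diagonal w * A) * U = (A * U)ᵀ * diagonal w * (A * U) := by
    simp only [transpose_mul, Matrix.mul_assoc, conjTranspose_eq_transpose_of_trivial]
  rw [hconj] at hcomm hle
  have hdiag := eq_diagonal_of_commute_diagonal hinj hcomm
  obtain ⟨f, hf⟩ := exists_embedding_of_transpose_mul_diagonal_mul_eq_diagonal hAU hdiag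
  exact ⟨f, by rwa [hf, ← hdiag]⟩

theorem exists_embedding_trace_inv_le {d : n → ℝ} (hd : ∀ j, 0 < d j)
    {w : m → ℝ} (hw : ∀ i, 0 ≤ w i) {A : Matrix m n ℝ} (hA : A * Aᵀ = 1) :
    ∃ f : m ↪ n,
      (diagonal d + (partialPermMatrix ℝ f)ᵀ * diagonal w * partialPermMatrix ℝ f)⁻¹.trace ≤
        (diagonal d + Aᵀ * diagonal w * A)⁻¹.trace := by
  by_contra! hlt
  have hcont (C : Matrix m n ℝ) :
      ContinuousAt (fun e : n → ℝ => (diagonal e + Cᵀ * diagonal w * C)⁻¹.trace) d :=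
    continuousAt_trace_inv_diagonal_add hd ((PosSemidef.diagonal hw).conjTranspose_mul_mul_same C)
  have hlt_near : ∀ᶠ e in nhds d, ∀ f : m ↪ n, (diagonal e + Aᵀ * diagonal w * A)⁻¹.trace <
      (diagonal e + (partialPermMatrix ℝ f)ᵀ * diagonal w * partialPermMatrix ℝ f)⁻¹.trace :=
    Filter.eventually_all.2 fun f => (hcont A).eventually_lt (hcont _) (hlt f)
  have hpos_near : ∀ᶠ e in nhds d, ∀ j, 0 < e j :=
    Filter.eventually_all.2 fun j => (continuousAt_apply j d).eventually_const_lt (hd j)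
  obtain ⟨e, hinj, hpos, hlt'⟩ :=
    ((mem_closure_iff_frequently.1 (dense_setOf_injective d)).and_eventually
      (hpos_near.and hlt_near)).exists
  obtain ⟨f, hf⟩ := exists_embedding_trace_inv_le_of_injective hpos hinj hw hA
  exact hf.not_gt (hlt' f)

theorem stmt_0_general {σx : n → ℝ} (hσx : ∀ j, 0 < σx j) {σw : m → ℝ} (hσw : ∀ i, 0 < σw i)
    {A : Matrix m n ℝ} (hA : A * Aᵀ = 1) :
    ∃ P : Matrix m n ℝ, (∀ i j, P i j = 0 ∨ P i j = 1) ∧ P * Pᵀ = 1 ∧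
      ((diagonal σx)⁻¹ + Aᵀ * (diagonal σw)⁻¹ * A)⁻¹.trace ≥
        ((diagonal σx)⁻¹ + Pᵀ * (diagonal σw)⁻¹ * P)⁻¹.trace := by
  rw [inv_diagonal_of_ne_zero fun j => (hσx j).ne', inv_diagonal_of_ne_zero fun i => (hσw i).ne']
  obtain ⟨f, hf⟩ := exists_embedding_trace_inv_le (fun j => inv_pos.2 (hσx j))
    (fun i => inv_nonneg.2 (hσw i).le) hA
  exact ⟨partialPermMatrix ℝ f, partialPermMatrix_eq_zero_or_one f,
    partialPermMatrix_mul_transpose f, hf⟩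

end TraceInv

/-- For any real M×N matrix A with A Aᵀ = I_M, there exists a partial
permutation matrix P̃ (binary entries, P̃ P̃ᵀ = I_M) such that
Tr((Σ_xx⁻¹ + Aᵀ Σ_ww⁻¹ A)⁻¹) ≥ Tr((Σ_xx⁻¹ + P̃ᵀ Σ_ww⁻¹ P̃)⁻¹). -/
theorem stmt_0 {N M : ℕ} (hMN : M ≤ N)
    (σx : Fin N → ℝ) (hσx : ∀ n, 0 < σx n)
    (σw : Fin M → ℝ) (hσw : ∀ m, 0 < σw m)
    (A : Matrix (Fin M) (Fin N) ℝ) (hA : A * Aᵀ = 1) :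
    ∃ P : Matrix (Fin M) (Fin N) ℝ,
      (∀ i j, P i j = 0 ∨ P i j = 1) ∧ P * Pᵀ = 1 ∧
      Matrix.trace (((Matrix.diagonal σx)⁻¹ + Aᵀ * (Matrix.diagonal σw)⁻¹ * A)⁻¹) ≥
        Matrix.trace (((Matrix.diagonal σx)⁻¹ + Pᵀ * (Matrix.diagonal σw)⁻¹ * P)⁻¹) :=
  stmt_0_general hσx hσw hA
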